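/- A finitely generated ideal of the monoid ℕ₀[x]* is a prime ideal if and only if it is empty or it is generated by a finite set of prime elements of ℕ₀[x]*; that is, the only nonempty finitely generated prime ideals of ℕ₀[x]* are (x), and the ideals of the form (p₁,…,pₙ) or (p₁,…,pₙ,x), where p₁,…,pₙ are prime numbers. -/

import Mathlib

open Polynomial

/-- `f ∈ ℕ₀[x]`: all coefficients of `f` are nonnegative. -/
def NNPoly (f : Polynomial ℤ) : Prop := ∀ n, 0 ≤ f.coeff n

/-- `f ∈ ℕ₀[x]* = ℕ₀[x] \ {0}`. -/
def NNStar (f : Polynomial ℤ) : Prop := NNPoly f ∧ f ≠ 0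

/-- `f ∣_ℕ g`: divisibility in the monoid `ℕ₀[x]*`. -/
def DvdN (f g : Polynomial ℤ) : Prop := ∃ h, NNStar h ∧ g = f * h

/-- `f` is an atom of the monoid `ℕ₀[x]*`. -/
def IsAtomN (f : Polynomial ℤ) : Prop :=
  NNStar f ∧ f ≠ 1 ∧ ∀ g h, NNStar g → NNStar h → f = g * h → g = 1 ∨ h = 1

/-- `f` is a prime element of the monoid `ℕ₀[x]*`. -/
def IsPrimeN (f : Polynomial ℤ) : Prop :=
  IsAtomN f ∧ ∀ g h, NNStar g → NNStar h → DvdN f (g * h) → DvdN f g ∨ DvdN f h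

/-- The underlying set of the monoid `ℕ₀[x]*`. -/
def NNSet : Set (Polynomial ℤ) := {f | NNStar f}

/-- The ideal of `ℕ₀[x]*` generated by a finite set `s`, namely `⋃_{g ∈ s} g·ℕ₀[x]*`. -/
def genSet (s : Finset (Polynomial ℤ)) : Set (Polynomial ℤ) := {f | ∃ g ∈ s, DvdN g f}

/-- `I` is a prime ideal of the monoid `ℕ₀[x]*`: a proper subset `P` such that for all
`x, y` in the monoid, `x·y ∈ P` iff `x ∈ P` or `y ∈ P`. -/
def IsPrimeIdealN (I : Set (Polynomial ℤ)) : Prop :=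
  I ⊆ NNSet ∧ I ≠ NNSet ∧
    ∀ x y, NNStar x → NNStar y → (x * y ∈ I ↔ x ∈ I ∨ y ∈ I)

/-!
The hard direction shows that in a finitely generated prime ideal `I`, every `f ∈ I` is divisible by
`X` or by a prime number lying in `I`, by induction on `f` along proper divisibility in `ℤ[X]`.
If `X` or a prime number divides `f`, primality of `I` applies directly. Otherwise `f` has positive
degree and positive constant coefficient, and so has `b = X + c`, which for suitable `c > 0` avoids
`I`. Some polynomial `q` of large degree, Eisenstein at `2`, has a negative coefficient although
`f * q` and `b * q` have none. Then `(f * q) * b = f * (b * q)` lies in `I`, hence so does `f * q`,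
and a generator `g` dividing it must divide `f` in `ℤ[X]`, because `q` is prime in `ℤ[X]` and has
degree too large to divide `g`. It is a proper divisor, since otherwise `q` would be the quotient
of `f * q` by `g` in `ℕ₀[x]`.
-/

/-! ### Nonnegative polynomials -/

lemma NNPoly.add {f g : ℤ[X]} (hf : NNPoly f) (hg : NNPoly g) : NNPoly (f + g) := fun n => by
  rw [coeff_add]
  exact add_nonneg (hf n) (hg n)

lemma NNPoly.mul {f g : ℤ[X]} (hf : NNPoly f) (hg : NNPoly g) : NNPoly (f * g) := fun n => by
  rw [coeff_mul]
  exact Finset.sum_nonneg fun x _ => mul_nonneg (hf x.1) (hg x.2)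

lemma nnPoly_C {c : ℤ} (hc : 0 ≤ c) : NNPoly (C c) := fun n => by
  rw [coeff_C]
  split_ifs
  exacts [hc, le_rfl]

lemma nnPoly_X_pow (k : ℕ) : NNPoly (X ^ k) := fun n => by
  rw [coeff_X_pow]
  split_ifs
  exacts [zero_le_one, le_rfl]

lemma NNPoly.coeff_mul_pos {f g : ℤ[X]} (hf : NNPoly f) (hg : NNPoly g) {i j : ℕ}
    (hi : 0 < f.coeff i) (hj : 0 < g.coeff j) : 0 < (f * g).coeff (i + j) := by
  rw [coeff_mul]
  exact Finset.sum_pos' (fun x _ => mul_nonneg (hf x.1) (hg x.2))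
    ⟨(i, j), Finset.HasAntidiagonal.mem_antidiagonal.mpr rfl, mul_pos hi hj⟩

lemma NNStar.mul {f g : ℤ[X]} (hf : NNStar f) (hg : NNStar g) : NNStar (f * g) :=
  ⟨hf.1.mul hg.1, mul_ne_zero hf.2 hg.2⟩

lemma nnStar_C {c : ℤ} (hc : 0 < c) : NNStar (C c) :=
  ⟨nnPoly_C hc.le, C_ne_zero.mpr hc.ne'⟩

lemma nnStar_one : NNStar 1 :=
  nnStar_C one_pos

lemma nnStar_X : NNStar X :=
  ⟨by simpa only [pow_one] using nnPoly_X_pow 1, X_ne_zero⟩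

lemma nnStar_X_add_C {c : ℤ} (hc : 0 ≤ c) : NNStar (X + C c) :=
  ⟨nnStar_X.1.add (nnPoly_C hc), X_add_C_ne_zero c⟩

lemma NNStar.leadingCoeff_pos {f : ℤ[X]} (hf : NNStar f) : 0 < f.leadingCoeff :=
  (hf.1 f.natDegree).lt_of_ne' (leadingCoeff_ne_zero.mpr hf.2)

lemma eq_one_of_isUnit_of_leadingCoeff_pos {f : ℤ[X]} (hu : IsUnit f) (hf : 0 < f.leadingCoeff) :
    f = 1 := by
  obtain ⟨r, hr, rfl⟩ := isUnit_iff.mp hu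
  rw [leadingCoeff_C] at hf
  rw [(Int.isUnit_iff.mp hr).resolve_right (by omega), C_1]

lemma NNStar.eq_one_of_isUnit {f : ℤ[X]} (hf : NNStar f) (hu : IsUnit f) : f = 1 :=
  eq_one_of_isUnit_of_leadingCoeff_pos hu hf.leadingCoeff_pos

lemma DvdN.dvd {f g : ℤ[X]} (h : DvdN f g) : f ∣ g := by
  obtain ⟨k, -, hk⟩ := h
  exact ⟨k, hk⟩

lemma DvdN.trans {f g h : ℤ[X]} (hfg : DvdN f g) (hgh : DvdN g h) : DvdN f h := by
  obtain ⟨a, ha, rfl⟩ := hfg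
  obtain ⟨b, hb, rfl⟩ := hgh
  exact ⟨a * b, ha.mul hb, mul_assoc f a b⟩

/-! ### Prime numbers and the variable -/

/-- `f` is `X` or a positive prime integer. These polynomials serve as the generators of the
finitely generated prime ideals of `ℕ₀[x]*`. -/
def IsXOrPrimeNumber (f : ℤ[X]) : Prop := f = X ∨ ∃ p : ℤ, 0 < p ∧ Prime p ∧ f = C p

namespace IsXOrPrimeNumber

variable {p f : ℤ[X]}

lemma nnStar (hp : IsXOrPrimeNumber p) : NNStar p := by
  obtain rfl | ⟨c, hc, -, rfl⟩ := hp
  exacts [nnStar_X, nnStar_C hc]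

lemma prime (hp : IsXOrPrimeNumber p) : Prime p := by
  obtain rfl | ⟨c, -, hc, rfl⟩ := hp
  exacts [prime_X, prime_C_iff.mpr hc]

lemma nnPoly_of_mul (hp : IsXOrPrimeNumber p) (h : NNPoly (p * f)) : NNPoly f := fun n => by
  obtain rfl | ⟨c, hc, -, rfl⟩ := hp
  · simpa only [coeff_X_mul] using h (n + 1)
  · have hn := h n
    rw [coeff_C_mul] at hn
    exact nonneg_of_mul_nonneg_right hn hc

lemma nnStar_of_mul (hp : IsXOrPrimeNumber p) (h : NNStar (p * f)) : NNStar f :=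
  ⟨hp.nnPoly_of_mul h.1, right_ne_zero_of_mul h.2⟩

lemma dvdN_of_dvd (hp : IsXOrPrimeNumber p) (hf : NNStar f) (h : p ∣ f) : DvdN p f := by
  obtain ⟨k, rfl⟩ := h
  exact ⟨k, hp.nnStar_of_mul hf, rfl⟩

lemma isPrimeN (hp : IsXOrPrimeNumber p) : IsPrimeN p := by
  refine ⟨⟨hp.nnStar, hp.prime.ne_one, fun g h hg hh hgh => ?_⟩, fun g h hg hh hd => ?_⟩
  · exact (hp.prime.irreducible.isUnit_or_isUnit hgh).imp hg.eq_one_of_isUnit hh.eq_one_of_isUnit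
  · exact (hp.prime.dvd_or_dvd hd.dvd).imp (hp.dvdN_of_dvd hg) (hp.dvdN_of_dvd hh)

end IsXOrPrimeNumber

lemma exists_isXOrPrimeNumber_dvd_C {c : ℤ} (hc : c.natAbs ≠ 1) :
    ∃ p, IsXOrPrimeNumber p ∧ p ∣ C c := by
  obtain ⟨p, hp, hpc⟩ := Nat.exists_prime_and_dvd hc
  exact ⟨C (p : ℤ), Or.inr ⟨p, mod_cast hp.pos, Nat.prime_iff_prime_int.mp hp, rfl⟩,
    _root_.map_dvd C (Int.natCast_dvd.mpr hpc)⟩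

lemma NNStar.exists_isXOrPrimeNumber_dvd {f : ℤ[X]} (hf : NNStar f) (h1 : f ≠ 1)
    (h : ¬(0 < f.natDegree ∧ 0 < f.coeff 0)) : ∃ p, IsXOrPrimeNumber p ∧ p ∣ f := by
  obtain h0 | h0 := (hf.1 0).eq_or_lt'
  · exact ⟨X, Or.inl rfl, X_dvd_iff.mpr h0⟩
  · have hfC : f = C (f.coeff 0) := eq_C_of_natDegree_eq_zero (by omega)
    have hc : f.coeff 0 ≠ 1 := fun hc => h1 (by rw [hfC, hc, C_1])
    rw [hfC]
    exact exists_isXOrPrimeNumber_dvd_C (by omega)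

/-! ### Primes with a negative coefficient and nonnegative multiples -/

lemma natDegree_X_pow_add_of_natDegree_lt {R : Type*} [Semiring R] [Nontrivial R] {f : R[X]}
    {N : ℕ} (hf : f.natDegree < N) : (X ^ N + f).natDegree = N := by
  rw [natDegree_add_eq_left_of_natDegree_lt (by rwa [natDegree_X_pow]), natDegree_X_pow]

lemma irreducible_X_pow_add_C_mul {R : Type*} [CommRing R] [IsDomain R] {p : R} (hp : Prime p)
    {w : R[X]} {N : ℕ} (hw : w.natDegree < N) (h0 : ¬p ∣ w.coeff 0) :
    Irreducible (X ^ N + C p * w) := by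
  have hP : (Ideal.span {p}).IsPrime := (Ideal.span_singleton_prime hp.ne_zero).mpr hp
  have hlt : (C p * w).natDegree < N := (natDegree_C_mul_le p w).trans_lt hw
  have hdeg : (X ^ N + C p * w).natDegree = N := natDegree_X_pow_add_of_natDegree_lt hlt
  have hmonic : (X ^ N + C p * w).Monic :=
    monic_X_pow_add (degree_le_natDegree.trans_lt (Nat.cast_lt.mpr hlt))
  have hcoeff {n : ℕ} (hn : n < N) : (X ^ N + C p * w).coeff n = p * w.coeff n := by
    rw [coeff_add, coeff_X_pow, if_neg hn.ne, zero_add, coeff_C_mul]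
  have hN : 0 < N := hw.pos
  refine IsEisensteinAt.irreducible ⟨hmonic.leadingCoeff_notMem hP.ne_top, fun {n} hn => ?_, ?_⟩
    hP hmonic.isPrimitive (hdeg.symm ▸ hN)
  · rw [hcoeff (hdeg ▸ hn), Ideal.mem_span_singleton]
    exact dvd_mul_right p _
  · rwa [hcoeff hN, Ideal.span_singleton_pow, Ideal.mem_span_singleton, sq,
      mul_dvd_mul_iff_left hp.ne_zero]

lemma eventually_nnPoly_C_mul_sub {u v : ℤ[X]} (hv : NNPoly v)
    (h : ∀ n, u.coeff n ≠ 0 → 0 < v.coeff n) :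
    ∀ᶠ M : ℤ in Filter.atTop, NNPoly (C M * v - u) := by
  have hsupp : ∀ᶠ M : ℤ in Filter.atTop, ∀ n ∈ u.support, u.coeff n ≤ M :=
    (Filter.eventually_all_finset _).mpr fun n _ => Filter.eventually_ge_atTop _
  filter_upwards [hsupp, Filter.eventually_ge_atTop 0] with M hM hM0 n
  rw [coeff_sub, coeff_C_mul, sub_nonneg]
  by_cases hn : u.coeff n = 0
  · rw [hn]
    exact mul_nonneg hM0 (hv n)
  · exact (hM n (mem_support_iff.mpr hn)).trans (le_mul_of_one_le_right hM0 (h n hn))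

/-- The sum of the powers `X ^ i` with `i ≤ 2 * d` and `i ≠ d`. For large `M`, the polynomial
`C M * gappedGeomSum d - X ^ d` has a negative coefficient, but its product with any nonnegative
polynomial of degree between `1` and `d` and with nonzero constant term has none. -/
noncomputable def gappedGeomSum (d : ℕ) : ℤ[X] := ∑ i ∈ (Finset.range (2 * d + 1)).erase d, X ^ i

lemma coeff_gappedGeomSum (d n : ℕ) :
    (gappedGeomSum d).coeff n = if n ≠ d ∧ n < 2 * d + 1 then 1 else 0 := by
  simp [gappedGeomSum, coeff_X_pow]

lemma natDegree_gappedGeomSum_le (d : ℕ) : (gappedGeomSum d).natDegree ≤ 2 * d :=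
  natDegree_le_iff_coeff_eq_zero.mpr fun n hn => by
    rw [coeff_gappedGeomSum, if_neg (by omega)]

lemma natDegree_C_mul_gappedGeomSum_sub_X_pow_le (M : ℤ) (d : ℕ) :
    (C M * gappedGeomSum d - X ^ d).natDegree ≤ 2 * d :=
  (natDegree_sub_le _ _).trans <| max_le
    ((natDegree_C_mul_le M _).trans (natDegree_gappedGeomSum_le d))
    ((natDegree_X_pow d).trans_le (by omega))

lemma nnPoly_gappedGeomSum (d : ℕ) : NNPoly (gappedGeomSum d) := fun n => by
  rw [coeff_gappedGeomSum]
  split_ifs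
  exacts [zero_le_one, le_rfl]

lemma coeff_gappedGeomSum_mul_pos {f : ℤ[X]} {d n : ℕ} (hf : NNPoly f) (hdeg : 0 < f.natDegree)
    (hd : f.natDegree ≤ d) (h0 : 0 < f.coeff 0) (hn : (X ^ d * f).coeff n ≠ 0) :
    0 < (gappedGeomSum d * f).coeff n := by
  rw [coeff_X_pow_mul', ne_eq, ite_eq_right_iff, Classical.not_imp] at hn
  have hnd : n - d ≤ f.natDegree := le_natDegree_of_ne_zero hn.2
  have hpos {i : ℕ} (hid : i ≠ d) (hi : i < 2 * d + 1) : 0 < (gappedGeomSum d).coeff i := by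
    rw [coeff_gappedGeomSum, if_pos ⟨hid, hi⟩]
    exact one_pos
  obtain rfl | hne := eq_or_ne n d
  · have hlead : 0 < f.coeff f.natDegree :=
      NNStar.leadingCoeff_pos ⟨hf, ne_zero_of_natDegree_gt hdeg⟩
    have hgap : 0 < (gappedGeomSum n).coeff (n - f.natDegree) := hpos (by omega) (by omega)
    simpa only [Nat.sub_add_cancel hd] using
      (nnPoly_gappedGeomSum n).coeff_mul_pos hf hgap hlead
  · exact (nnPoly_gappedGeomSum d).coeff_mul_pos hf (hpos hne (by omega)) h0

lemma eventually_nnPoly_mul_gappedGeomSum_sub {f : ℤ[X]} {d : ℕ} (hf : NNPoly f)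
    (hdeg : 0 < f.natDegree) (hd : f.natDegree ≤ d) (h0 : 0 < f.coeff 0) :
    ∀ᶠ M : ℤ in Filter.atTop, NNPoly (f * (C M * gappedGeomSum d - X ^ d)) := by
  filter_upwards [eventually_nnPoly_C_mul_sub ((nnPoly_gappedGeomSum d).mul hf)
    fun _ => coeff_gappedGeomSum_mul_pos hf hdeg hd h0] with M hM
  convert hM using 1
  ring

lemma exists_prime_not_nnPoly_forall_mul_nnPoly (F : Finset ℤ[X])
    (hF : ∀ f ∈ F, NNPoly f ∧ 0 < f.natDegree ∧ 0 < f.coeff 0) (K : ℕ) :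
    ∃ q : ℤ[X], Prime q ∧ K < q.natDegree ∧ ¬NNPoly q ∧ ∀ f ∈ F, NNPoly (f * q) := by
  set d := F.sup natDegree + 1 with hd
  have hev : ∀ᶠ M : ℤ in Filter.atTop, ∀ f ∈ F, NNPoly (f * (C M * gappedGeomSum d - X ^ d)) :=
    (Filter.eventually_all_finset F).mpr fun f hf =>
      eventually_nnPoly_mul_gappedGeomSum_sub (hF f hf).1 (hF f hf).2.1
        ((Finset.le_sup hf).trans (Nat.le_succ _)) (hF f hf).2.2
  obtain ⟨M₀, hM₀⟩ := Filter.eventually_atTop.mp hev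
  obtain ⟨M, hM, hodd⟩ : ∃ M, M₀ ≤ M ∧ ¬2 ∣ M := ⟨2 * |M₀| + 1, by grind, by omega⟩
  set w : ℤ[X] := C M * gappedGeomSum d - X ^ d with hw
  set N := 2 * d + K + 1
  have hw0 : w.coeff 0 = M := by
    simp [hw, coeff_gappedGeomSum, coeff_X_pow, hd]
  have hwd : w.coeff d = -1 := by
    simp [hw, coeff_gappedGeomSum]
  have hwdeg : w.natDegree < N :=
    (natDegree_C_mul_gappedGeomSum_sub_X_pow_le M d).trans_lt (by omega)
  have hdeg : (X ^ N + C 2 * w).natDegree = N :=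
    natDegree_X_pow_add_of_natDegree_lt ((natDegree_C_mul_le 2 w).trans_lt hwdeg)
  refine ⟨X ^ N + C 2 * w, ?_, by omega, fun hnn => ?_, fun f hf => ?_⟩
  · exact (irreducible_X_pow_add_C_mul Int.prime_two hwdeg (hw0.symm ▸ hodd)).prime
  · have hneg := hnn d
    rw [coeff_add, coeff_X_pow, if_neg (by omega), coeff_C_mul, hwd] at hneg
    omega
  · rw [mul_add, mul_left_comm]
    exact ((hF f hf).1.mul (nnPoly_X_pow N)).add
      ((nnPoly_C zero_le_two).mul (hM₀ M hM f hf))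

/-! ### Finitely generated prime ideals -/

lemma genSet_empty : genSet ∅ = ∅ := by
  simp [genSet]

lemma mem_genSet_of_mem {s : Finset ℤ[X]} {g : ℤ[X]} (hg : g ∈ s) : g ∈ genSet s :=
  ⟨g, hg, 1, nnStar_one, (mul_one g).symm⟩

lemma isPrimeIdealN_genSet {s : Finset ℤ[X]} (hs : ∀ g ∈ s, IsPrimeN g) :
    IsPrimeIdealN (genSet s) := by
  refine ⟨?_, fun h => ?_, fun x y hx hy => ⟨?_, ?_⟩⟩
  · rintro _ ⟨g, hg, h, hh, rfl⟩
    exact (hs g hg).1.1.mul hh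
  · obtain ⟨g, hg, hg1⟩ : (1 : ℤ[X]) ∈ genSet s := h ▸ nnStar_one
    exact (hs g hg).1.2.1 ((hs g hg).1.1.eq_one_of_isUnit (isUnit_of_dvd_one hg1.dvd))
  · rintro ⟨g, hg, hgxy⟩
    exact ((hs g hg).2 x y hx hy hgxy).imp (fun h => ⟨g, hg, h⟩) (fun h => ⟨g, hg, h⟩)
  · rintro (⟨g, hg, hgx⟩ | ⟨g, hg, hgy⟩)
    · exact ⟨g, hg, hgx.trans ⟨y, hy, rfl⟩⟩
    · exact ⟨g, hg, hgy.trans ⟨x, hx, mul_comm x y⟩⟩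

namespace IsPrimeIdealN

variable {s : Finset ℤ[X]} {f : ℤ[X]}

lemma one_notMem {I : Set ℤ[X]} (hI : IsPrimeIdealN I) : (1 : ℤ[X]) ∉ I := fun h1 =>
  hI.2.1 <| hI.1.antisymm fun f hf => by
    simpa only [one_mul] using (hI.2.2 1 f nnStar_one hf).mpr (Or.inl h1)

lemma mem_of_irreducible (hI : IsPrimeIdealN (genSet s)) (hf : Irreducible f)
    (hfI : f ∈ genSet s) : f ∈ s := by
  obtain ⟨g, hg, h, hh, rfl⟩ := hfI
  have hgI := mem_genSet_of_mem hg
  have hgu : ¬IsUnit g := fun hu => hI.one_notMem ((hI.1 hgI).eq_one_of_isUnit hu ▸ hgI)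
  rwa [hh.eq_one_of_isUnit ((hf.isUnit_or_isUnit rfl).resolve_left hgu), mul_one]

lemma exists_X_add_C_notMem (hI : IsPrimeIdealN (genSet s)) :
    ∃ c : ℤ, 0 < c ∧ X + C c ∉ genSet s := by
  have hinj : Function.Injective fun c : ℤ => X + C c :=
    fun _ _ h => C_injective (add_left_cancel h)
  obtain ⟨c, hc, hcs⟩ := (Set.Ioi_infinite (0 : ℤ)).exists_notMem_finset (s.preimage _ hinj.injOn)
  have hirr : Irreducible (X + C c) := by
    simpa only [C_neg, sub_neg_eq_add] using irreducible_X_sub_C (-c)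
  exact ⟨c, hc, fun h => hcs (Finset.mem_preimage.mpr (hI.mem_of_irreducible hirr h))⟩

lemma exists_dvdNotUnit_of_natDegree_pos (hI : IsPrimeIdealN (genSet s)) (hfI : f ∈ genSet s)
    (hdeg : 0 < f.natDegree) (h0 : 0 < f.coeff 0) : ∃ g ∈ genSet s, DvdNotUnit g f := by
  classical
  have hf : NNStar f := hI.1 hfI
  obtain ⟨c, hc, hbI⟩ := hI.exists_X_add_C_notMem
  have hb : NNStar (X + C c) := nnStar_X_add_C hc.le
  have hF : ∀ u ∈ ({f, X + C c} : Finset ℤ[X]), NNPoly u ∧ 0 < u.natDegree ∧ 0 < u.coeff 0 := by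
    simp only [Finset.mem_insert, Finset.mem_singleton]
    rintro u (rfl | rfl)
    · exact ⟨hf.1, hdeg, h0⟩
    · rw [natDegree_X_add_C, coeff_add, coeff_X_zero, coeff_C_zero, zero_add]
      exact ⟨hb.1, one_pos, hc⟩
  obtain ⟨q, hq, hqdeg, hqneg, hmul⟩ :=
    exists_prime_not_nnPoly_forall_mul_nnPoly _ hF (s.sup natDegree)
  have hfq : NNStar (f * q) := ⟨hmul f (by simp), mul_ne_zero hf.2 hq.ne_zero⟩
  have hbq : NNStar ((X + C c) * q) := ⟨hmul _ (by simp), mul_ne_zero hb.2 hq.ne_zero⟩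
  have hfqb : f * q * (X + C c) ∈ genSet s := by
    rw [mul_assoc, mul_comm q]
    exact (hI.2.2 f _ hf hbq).mpr (Or.inl hfI)
  obtain ⟨g, hgs, h, hh, hgh⟩ := ((hI.2.2 _ _ hfq hb).mp hfqb).resolve_right hbI
  have hgI := mem_genSet_of_mem hgs
  have hqg : ¬q ∣ g := fun hqg =>
    ((natDegree_le_of_dvd hqg (hI.1 hgI).2).trans (Finset.le_sup hgs)).not_gt hqdeg
  obtain ⟨k, rfl⟩ := (hq.dvd_or_dvd (Dvd.intro_left f hgh)).resolve_left hqg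
  have hfgk : f = g * k := mul_right_cancel₀ hq.ne_zero (by rw [hgh]; ring)
  refine ⟨g, hgI, (hI.1 hgI).2, k, fun hk => hqneg ?_, hfgk⟩
  have hk1 : k = 1 := by
    have hlead := hf.leadingCoeff_pos
    rw [hfgk, leadingCoeff_mul] at hlead
    exact eq_one_of_isUnit_of_leadingCoeff_pos hk
      (pos_of_mul_pos_right hlead (hI.1 hgI).leadingCoeff_pos.le)
  simpa only [hk1, mul_one] using hh.1

lemma exists_isXOrPrimeNumber_mem_or_exists_dvdNotUnit (hI : IsPrimeIdealN (genSet s))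
    (hfI : f ∈ genSet s) :
    (∃ p ∈ genSet s, IsXOrPrimeNumber p ∧ p ∣ f) ∨ ∃ g ∈ genSet s, DvdNotUnit g f := by
  by_cases h : 0 < f.natDegree ∧ 0 < f.coeff 0
  · exact Or.inr (hI.exists_dvdNotUnit_of_natDegree_pos hfI h.1 h.2)
  have hf1 : f ≠ 1 := fun h1 => hI.one_notMem (h1 ▸ hfI)
  obtain ⟨p, hp, k, rfl⟩ := (hI.1 hfI).exists_isXOrPrimeNumber_dvd hf1 h
  have hk : NNStar k := hp.nnStar_of_mul (hI.1 hfI)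
  refine ((hI.2.2 p k hp.nnStar hk).mp hfI).imp (fun hpI => ?_) (fun hkI => ?_)
  · exact ⟨p, hpI, hp, dvd_mul_right p k⟩
  · exact ⟨k, hkI, hk.2, p, hp.prime.not_isUnit, mul_comm p k⟩

lemma exists_isXOrPrimeNumber_dvd (hI : IsPrimeIdealN (genSet s)) (hfI : f ∈ genSet s) :
    ∃ p ∈ genSet s, IsXOrPrimeNumber p ∧ p ∣ f := by
  induction f using (IsWellFounded.wf (r := DvdNotUnit (α := ℤ[X]))).induction with
  | _ f ih =>
    obtain h | ⟨g, hgI, hgf⟩ := hI.exists_isXOrPrimeNumber_mem_or_exists_dvdNotUnit hfI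
    · exact h
    · obtain ⟨p, hpI, hp, hpg⟩ := ih g hgf hgI
      obtain ⟨-, k, -, rfl⟩ := hgf
      exact ⟨p, hpI, hp, hpg.mul_right k⟩

lemma exists_forall_isPrimeN_genSet_eq (hI : IsPrimeIdealN (genSet s)) :
    ∃ t : Finset ℤ[X], (∀ g ∈ t, IsPrimeN g) ∧ genSet s = genSet t := by
  classical
  refine ⟨s.filter IsXOrPrimeNumber, fun g hg => (Finset.mem_filter.mp hg).2.isPrimeN,
    Set.Subset.antisymm (fun f hf => ?_) ?_⟩
  · obtain ⟨p, hpI, hp, hpf⟩ := hI.exists_isXOrPrimeNumber_dvd hf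
    have hps : p ∈ s := hI.mem_of_irreducible hp.prime.irreducible hpI
    exact ⟨p, Finset.mem_filter.mpr ⟨hps, hp⟩, hp.dvdN_of_dvd (hI.1 hf) hpf⟩
  · rintro f ⟨g, hg, hgf⟩
    exact ⟨g, Finset.mem_of_mem_filter g hg, hgf⟩

end IsPrimeIdealN

/-- A finitely generated ideal of `ℕ₀[x]*` is a prime ideal if and only if it is empty or
generated by a nonempty finite set of prime elements of `ℕ₀[x]*` (i.e. it is one of `(x)`,
`(p₁,…,pₙ)` or `(p₁,…,pₙ,x)` with the `pᵢ` prime numbers). -/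
theorem stmt7 (I : Set (Polynomial ℤ))
    (hI : ∃ s : Finset (Polynomial ℤ), (↑s : Set (Polynomial ℤ)) ⊆ NNSet ∧ I = genSet s) :
    IsPrimeIdealN I ↔
      I = ∅ ∨ ∃ s : Finset (Polynomial ℤ), s.Nonempty ∧ (∀ g ∈ s, IsPrimeN g) ∧
        I = genSet s := by
  constructor
  · intro hP
    obtain ⟨s, -, rfl⟩ := hI
    obtain ⟨t, ht, hst⟩ := hP.exists_forall_isPrimeN_genSet_eq
    obtain rfl | hne := t.eq_empty_or_nonempty
    · exact Or.inl (hst.trans genSet_empty)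
    · exact Or.inr ⟨t, hne, ht, hst⟩
  · rintro (rfl | ⟨t, -, ht, rfl⟩)
    · rw [← genSet_empty]
      exact isPrimeIdealN_genSet (by simp)
    · exact isPrimeIdealN_genSet ht
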